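/- arXiv:1607.04499 — 3 statements merged into one kernel-verified Lean document; each statement's English description precedes it below -/
import Mathlib

section
/- Let F be a finite field with q elements, let n be a positive integer, and let A ∈ M_n(F) have rank r < n. Consider pairs (v, u) with v ∈ F^n a column vector and u ∈ F^n (viewed as a row vector), and the rank-one update A + v·uᵀ. Then: (1) the number of pairs (v, u) ∈ F^n × F^n such that A + v·uᵀ has rank r+1 is exactly (1 − q^(−(n−r)))² · q^(2n); (2) the number of pairs such that A + v·uᵀ has rank r−1 is at most q^(−2(n−r)) · q^(2n); (3) for every pair (v, u), the rank of A + v·uᵀ lies in {r−1, r, r+1}. -/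
/-!
Write `B = A + v uᵀ`. Every column of `B` is a column of `A` plus a multiple of `v`, so the rank
cannot grow if `v` lies in the column space of `A`, nor, by transposition, if `u` lies in the row
space of `A`. If `u` is outside the row space, then some `x` with `A x = 0` has `u ⬝ x ≠ 0`, and
`B x = (u ⬝ x) v` puts `v` in the column space of `B`; if moreover `v` is outside the column space
of `A`, the column space has grown. Hence the rank grows exactly when both vectors are outside.
Since `A = B + (-v) uᵀ`, the rank drops only if passing from `B` to `A` raises it, and then `v` and
`u` lie in the column and row space of `A`. So the pairs raising the rank form the product of the
complements of these two spaces, the pairs lowering it lie in the product of the spaces themselves,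
and each space has `q ^ rank A` elements.
-/

namespace RankOneUpdate

open Matrix Module Submodule

section ColumnSpace

variable {F m n : Type*}

theorem add_vecMulVec_add_neg_vecMulVec [NonUnitalNonAssocRing F] (A : Matrix m n F)
    (v : m → F) (u : n → F) : A + vecMulVec v u + vecMulVec (-v) u = A := by
  rw [neg_vecMulVec, add_neg_cancel_right]

theorem span_col_add_vecMulVec_le [CommSemiring F] (A : Matrix m n F) (v : m → F) (u : n → F) :
    span F (Set.range (A + vecMulVec v u).col) ≤ span F (Set.range A.col) ⊔ span F {v} := by
  rw [span_le]
  rintro _ ⟨j, rfl⟩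
  have col_eq : (A + vecMulVec v u).col j = A.col j + u j • v := by
    ext i
    simp [vecMulVec_apply, mul_comm]
  rw [col_eq]
  exact add_mem_sup (subset_span ⟨j, rfl⟩) (smul_mem _ _ (mem_span_singleton_self v))

variable [Field F]

theorem exists_mulVec_eq_zero_of_notMem_span_row [Fintype n] {A : Matrix m n F} {u : n → F}
    (hu : u ∉ span F (Set.range A.row)) : ∃ x, A *ᵥ x = 0 ∧ u ⬝ᵥ x ≠ 0 := by
  classical
  obtain ⟨f, hfu, hf⟩ := exists_le_ker_of_notMem hu
  obtain ⟨x, rfl⟩ := (dotProductEquiv F n).surjective f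
  refine ⟨x, ?_, by rwa [dotProduct_comm]⟩
  ext i
  exact (dotProduct_comm _ _).trans (hf (subset_span ⟨i, rfl⟩))

theorem mem_span_col_add_vecMulVec [Finite n] {A : Matrix m n F} (v : m → F) {u : n → F}
    (hu : u ∉ span F (Set.range A.row)) :
    v ∈ span F (Set.range (A + vecMulVec v u).col) := by
  cases nonempty_fintype n
  obtain ⟨x, hAx, hux⟩ := exists_mulVec_eq_zero_of_notMem_span_row hu
  have image_eq : (A + vecMulVec v u) *ᵥ x = (u ⬝ᵥ x) • v := by
    rw [add_mulVec, hAx, zero_add, vecMulVec_mulVec, op_smul_eq_smul]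
  rw [← smul_mem_iff _ hux, ← image_eq, ← range_mulVecLin]
  exact LinearMap.mem_range_self _ x

theorem span_col_lt_span_col_add_vecMulVec [Finite n] {A : Matrix m n F} {v : m → F}
    {u : n → F}
    (hv : v ∉ span F (Set.range A.col)) (hu : u ∉ span F (Set.range A.row)) :
    span F (Set.range A.col) < span F (Set.range (A + vecMulVec v u).col) := by
  have v_mem := mem_span_col_add_vecMulVec v hu
  refine lt_of_le_of_ne ?_ fun h ↦ hv (h ▸ v_mem)
  calc span F (Set.range A.col)
      = span F (Set.range (A + vecMulVec v u + vecMulVec (-v) u).col) := by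
        rw [add_vecMulVec_add_neg_vecMulVec]
    _ ≤ span F (Set.range (A + vecMulVec v u).col) ⊔ span F {-v} :=
        span_col_add_vecMulVec_le _ _ _
    _ = span F (Set.range (A + vecMulVec v u).col) :=
        sup_eq_left.2 <| (span_singleton_le_iff_mem _ _).2 (neg_mem v_mem)

end ColumnSpace

section Rank

variable {F m n : Type*} [Field F] [Fintype n] (A : Matrix m n F) (v : m → F) (u : n → F)

theorem rank_transpose_add_vecMulVec [Fintype m] :
    (Aᵀ + vecMulVec u v).rank = (A + vecMulVec v u).rank := by
  rw [← rank_transpose (A + vecMulVec v u), transpose_add, transpose_vecMulVec]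

variable [Finite m]

theorem rank_add_vecMulVec_le_succ : (A + vecMulVec v u).rank ≤ A.rank + 1 := by
  simp only [rank_eq_finrank_span_cols]
  calc finrank F (span F (Set.range (A + vecMulVec v u).col))
      ≤ finrank F ↥(span F (Set.range A.col) ⊔ span F {v}) :=
        finrank_mono (span_col_add_vecMulVec_le A v u)
    _ ≤ finrank F (span F (Set.range A.col)) + finrank F (span F {v}) :=
        finrank_add_le_finrank_add_finrank _ _
    _ ≤ finrank F (span F (Set.range A.col)) + 1 := by
        gcongr
        simpa using finrank_span_le_card (R := F) {v}

theorem rank_le_rank_add_vecMulVec_succ : A.rank ≤ (A + vecMulVec v u).rank + 1 := by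
  simpa only [add_vecMulVec_add_neg_vecMulVec] using
    rank_add_vecMulVec_le_succ (A + vecMulVec v u) (-v) u

variable {A v} in
theorem rank_add_vecMulVec_le_of_mem_span_col (hv : v ∈ span F (Set.range A.col)) :
    (A + vecMulVec v u).rank ≤ A.rank := by
  simp only [rank_eq_finrank_span_cols]
  refine finrank_mono ((span_col_add_vecMulVec_le A v u).trans ?_)
  exact sup_le le_rfl ((span_singleton_le_iff_mem _ _).2 hv)

variable {A u} in
theorem rank_add_vecMulVec_le_of_mem_span_row (hu : u ∈ span F (Set.range A.row)) :
    (A + vecMulVec v u).rank ≤ A.rank := by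
  cases nonempty_fintype m
  rw [← rank_transpose_add_vecMulVec, ← rank_transpose A]
  exact rank_add_vecMulVec_le_of_mem_span_col v (by rwa [col_transpose])

theorem rank_add_vecMulVec_eq_succ_iff :
    (A + vecMulVec v u).rank = A.rank + 1 ↔
      v ∉ span F (Set.range A.col) ∧ u ∉ span F (Set.range A.row) := by
  constructor
  · intro h
    refine ⟨fun hv ↦ ?_, fun hu ↦ ?_⟩
    · exact absurd (rank_add_vecMulVec_le_of_mem_span_col u hv) (by lia)
    · exact absurd (rank_add_vecMulVec_le_of_mem_span_row v hu) (by lia)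
  · rintro ⟨hv, hu⟩
    refine (rank_add_vecMulVec_le_succ A v u).antisymm ?_
    simp only [rank_eq_finrank_span_cols]
    exact finrank_lt_finrank_of_lt (span_col_lt_span_col_add_vecMulVec hv hu)

variable {A v u}

theorem mem_span_col_of_rank_add_vecMulVec_succ_eq (h : (A + vecMulVec v u).rank + 1 = A.rank) :
    v ∈ span F (Set.range A.col) := by
  have increases : (A + vecMulVec v u + vecMulVec (-v) u).rank = (A + vecMulVec v u).rank + 1 := by
    rw [add_vecMulVec_add_neg_vecMulVec, h]
  have u_notMem := ((rank_add_vecMulVec_eq_succ_iff _ _ _).1 increases).2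
  simpa only [add_vecMulVec_add_neg_vecMulVec, neg_mem_iff] using
    mem_span_col_add_vecMulVec (-v) u_notMem

theorem mem_span_row_of_rank_add_vecMulVec_succ_eq (h : (A + vecMulVec v u).rank + 1 = A.rank) :
    u ∈ span F (Set.range A.row) := by
  cases nonempty_fintype m
  rw [← col_transpose]
  apply mem_span_col_of_rank_add_vecMulVec_succ_eq (v := u) (u := v)
  rw [rank_transpose_add_vecMulVec, rank_transpose, h]

end Rank

section Counting

variable {F V : Type*} [Field F] [AddCommGroup V] [Module F V]

theorem ncard_submodule_eq_pow_finrank [Module.Finite F V] (W : Submodule F V) :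
    (W : Set V).ncard = Nat.card F ^ finrank F W :=
  (Nat.card_coe_set_eq (W : Set V)).symm.trans (natCard_eq_pow_finrank (V := W))

theorem ncard_compl_submodule [Finite F] [Module.Finite F V] (W : Submodule F V) :
    (W : Set V)ᶜ.ncard = Nat.card F ^ finrank F V - Nat.card F ^ finrank F W := by
  have := Module.finite_of_finite F (M := V)
  rw [Set.ncard_compl, natCard_eq_pow_finrank (K := F), ncard_submodule_eq_pow_finrank]

variable {m n : Type*} [Finite F] [Finite m] [Fintype n] (A : Matrix m n F)

theorem natCard_rank_add_vecMulVec_eq_succ :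
    Nat.card {p : (m → F) × (n → F) // (A + vecMulVec p.1 p.2).rank = A.rank + 1} =
      (Nat.card F ^ Nat.card m - Nat.card F ^ A.rank) *
        (Nat.card F ^ Nat.card n - Nat.card F ^ A.rank) := by
  cases nonempty_fintype m
  have set_eq : {p : (m → F) × (n → F) | (A + vecMulVec p.1 p.2).rank = A.rank + 1} =
      (span F (Set.range A.col) : Set (m → F))ᶜ ×ˢ (span F (Set.range A.row) : Set (n → F))ᶜ :=
    Set.ext fun p ↦ rank_add_vecMulVec_eq_succ_iff A p.1 p.2
  calc Nat.card {p : (m → F) × (n → F) // (A + vecMulVec p.1 p.2).rank = A.rank + 1}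
      = (span F (Set.range A.col) : Set (m → F))ᶜ.ncard *
          (span F (Set.range A.row) : Set (n → F))ᶜ.ncard := by
        rw [← Set.ncard_prod, ← set_eq]
        rfl
    _ = _ := by
        simp only [ncard_compl_submodule, ← rank_eq_finrank_span_cols, ← rank_eq_finrank_span_row,
          finrank_fintype_fun_eq_card, Nat.card_eq_fintype_card]

theorem natCard_rank_add_vecMulVec_succ_eq_le :
    Nat.card {p : (m → F) × (n → F) // (A + vecMulVec p.1 p.2).rank + 1 = A.rank} ≤
      Nat.card F ^ (2 * A.rank) := by
  have subset_prod : {p : (m → F) × (n → F) | (A + vecMulVec p.1 p.2).rank + 1 = A.rank} ⊆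
      (span F (Set.range A.col) : Set (m → F)) ×ˢ (span F (Set.range A.row) : Set (n → F)) :=
    fun _ h ↦ ⟨mem_span_col_of_rank_add_vecMulVec_succ_eq h,
      mem_span_row_of_rank_add_vecMulVec_succ_eq h⟩
  calc Nat.card {p : (m → F) × (n → F) // (A + vecMulVec p.1 p.2).rank + 1 = A.rank}
      ≤ ((span F (Set.range A.col) : Set (m → F)) ×ˢ
          (span F (Set.range A.row) : Set (n → F))).ncard :=
        Set.ncard_le_ncard subset_prod (Set.toFinite _)
    _ = Nat.card F ^ (2 * A.rank) := by
        rw [Set.ncard_prod, ncard_submodule_eq_pow_finrank, ncard_submodule_eq_pow_finrank,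
          ← rank_eq_finrank_span_cols, ← rank_eq_finrank_span_row, ← pow_add, ← two_mul]

end Counting

end RankOneUpdate

theorem rank_one_update_rank_counts_general
    {F m n : Type*} [Field F] [Finite F] [Finite m] [Fintype n] (A : Matrix m n F) :
    Nat.card {p : (m → F) × (n → F) //
        (A + Matrix.vecMulVec p.1 p.2).rank = A.rank + 1} =
      (Nat.card F ^ Nat.card m - Nat.card F ^ A.rank) *
        (Nat.card F ^ Nat.card n - Nat.card F ^ A.rank) ∧
    Nat.card {p : (m → F) × (n → F) //
        (A + Matrix.vecMulVec p.1 p.2).rank + 1 = A.rank} ≤ Nat.card F ^ (2 * A.rank) ∧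
    ∀ (v : m → F) (u : n → F),
      (A + Matrix.vecMulVec v u).rank + 1 = A.rank ∨
      (A + Matrix.vecMulVec v u).rank = A.rank ∨
      (A + Matrix.vecMulVec v u).rank = A.rank + 1 := by
  refine ⟨RankOneUpdate.natCard_rank_add_vecMulVec_eq_succ A,
    RankOneUpdate.natCard_rank_add_vecMulVec_succ_eq_le A, fun v u ↦ ?_⟩
  have upper := RankOneUpdate.rank_add_vecMulVec_le_succ A v u
  have lower := RankOneUpdate.rank_le_rank_add_vecMulVec_succ A v u
  lia

/-- counting rank-one updates of a rank-`r` matrix (`r < n`) over a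
finite field with `q` elements: exactly `(q^n - q^r)^2 = (1 - q^{-(n-r)})^2 q^{2n}`
pairs `(v, u)` give rank `r+1`, at most `q^{2r} = q^{-2(n-r)} q^{2n}` pairs give
rank `r-1`, and the rank always lies in `{r-1, r, r+1}`. -/
theorem rank_one_update_rank_counts
    {F : Type*} [Field F] [Fintype F] (n r q : ℕ) (hq : q = Fintype.card F)
    (A : Matrix (Fin n) (Fin n) F) (hr : A.rank = r) (hrn : r < n) :
    Nat.card {p : (Fin n → F) × (Fin n → F) //
        (A + Matrix.vecMulVec p.1 p.2).rank = r + 1} = (q ^ n - q ^ r) ^ 2 ∧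
    Nat.card {p : (Fin n → F) × (Fin n → F) //
        (A + Matrix.vecMulVec p.1 p.2).rank + 1 = r} ≤ q ^ (2 * r) ∧
    ∀ v u : Fin n → F,
      (A + Matrix.vecMulVec v u).rank + 1 = r ∨
      (A + Matrix.vecMulVec v u).rank = r ∨
      (A + Matrix.vecMulVec v u).rank = r + 1 := by
  subst hq hr
  simpa only [Nat.card_eq_fintype_card, Fintype.card_fin, ← sq] using
    rank_one_update_rank_counts_general A
end

section
/- Let F be a finite field with q elements, let n be a positive integer, let A ∈ M_n(F) have rank r < n, and let k be a positive integer with k > n − r. Then the number of pairs (U, V) with U ∈ F^(k×n) and V ∈ F^(n×k) such that A + V·U is invertible is at least ((q⁴ − 2)(q² − q − 1) / (q³(q³ + q² + q + 1))) · q^(2nk). In particular this fraction is at least 1 − 2/q. -/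
/-!
Choose `V` first. The ranges of `A` and `V` together span the whole space exactly when the map to
the cokernel of `A` induced by `V` is surjective, and this map is uniformly distributed; as the
corank of `A` is less than `k`, this happens with probability at least `1 - 1 / (q * (q - 1))`.

Given such a `V`, let `C` be its range and `K` the preimage of `C` under `A`. Then `dim K = dim C`,
the kernel of `A + V * U` lies in `K`, and the restriction of `A + V * U` to a map `K → C` is
uniformly distributed as `U` varies. So `A + V * U` is invertible with the probability that a random
square matrix of size `rank V` is, at least `(1 - 1 / (q * (q - 1))) * (1 - 1 / q)`.
-/

open Function
open Module hiding Injective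

section Estimates

open Finset

theorem one_sub_sum_le_prod_one_sub {ι R : Type*} [CommRing R] [PartialOrder R] [IsOrderedRing R]
    {s : Finset ι} {f : ι → R} (h₀ : ∀ i ∈ s, 0 ≤ f i) (h₁ : ∀ i ∈ s, f i ≤ 1) :
    1 - ∑ i ∈ s, f i ≤ ∏ i ∈ s, (1 - f i) := by
  classical
  induction s using Finset.induction_on with
  | empty => simp
  | insert a s ha ih =>
    simp only [forall_mem_insert] at h₀ h₁
    have h_prod : ∏ i ∈ s, (1 - f i) ≤ 1 :=
      prod_le_one (fun i hi => sub_nonneg.2 (h₁.2 i hi)) fun i hi => sub_le_self _ (h₀.2 i hi)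
    rw [sum_insert ha, prod_insert ha]
    calc 1 - (f a + ∑ i ∈ s, f i) = (1 - ∑ i ∈ s, f i) - f a * 1 := by ring
      _ ≤ ∏ i ∈ s, (1 - f i) - f a * ∏ i ∈ s, (1 - f i) :=
        sub_le_sub (ih h₀.2 h₁.2) (mul_le_mul_of_nonneg_left h_prod h₀.1)
      _ = (1 - f a) * ∏ i ∈ s, (1 - f i) := by ring

variable {R : Type*} [Field R] [LinearOrder R] [IsStrictOrderedRing R] {q : R}

theorem one_sub_le_prod_one_sub_pow_div_pow (hq : 1 < q) {d k : ℕ} (h : d < k) :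
    1 - 1 / (q * (q - 1)) ≤ ∏ i ∈ range d, (1 - q ^ i / q ^ k) := by
  have hq₀ : 0 < q := one_pos.trans hq
  have hq₁ : 0 < q - 1 := sub_pos.2 hq
  have h_sum : ∑ i ∈ range d, q ^ i / q ^ k ≤ 1 / (q * (q - 1)) := by
    rw [← sum_div, geom_sum_eq hq.ne', div_div, div_le_div_iff₀ (by positivity) (by positivity)]
    calc (q ^ d - 1) * (q * (q - 1)) ≤ q ^ d * (q * (q - 1)) :=
          mul_le_mul_of_nonneg_right (sub_le_self _ zero_le_one) (by positivity)
      _ = q ^ (d + 1) * (q - 1) := by ring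
      _ ≤ q ^ k * (q - 1) := by gcongr; exacts [hq.le, h]
      _ = 1 * ((q - 1) * q ^ k) := by ring
  refine (sub_le_sub_left h_sum 1).trans
    (one_sub_sum_le_prod_one_sub (fun i _ => by positivity) fun i hi => ?_)
  rw [div_le_one (by positivity)]
  exact pow_le_pow_right₀ hq.le ((mem_range.1 hi).trans h).le

theorem mul_one_sub_le_prod_one_sub_pow_div_pow_self (hq : 1 < q) (s : ℕ) :
    (1 - 1 / (q * (q - 1))) * (1 - 1 / q) ≤ ∏ i ∈ range s, (1 - q ^ i / q ^ s) := by
  have hq₀ : 0 < q := one_pos.trans hq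
  have hq₁ : 0 < q - 1 := sub_pos.2 hq
  cases s with
  | zero =>
    have h_eq : (1 - 1 / (q * (q - 1))) * (1 - 1 / q) = 1 - (1 / q + 1 / q ^ 2) := by
      field_simp
      ring
    rw [h_eq, prod_range_zero]
    exact sub_le_self _ (by positivity)
  | succ s =>
    have h_last : q ^ s / q ^ (s + 1) = 1 / q := by
      rw [pow_succ, div_mul_cancel_left₀ (by positivity), one_div]
    rw [prod_range_succ, h_last]
    refine mul_le_mul_of_nonneg_right (one_sub_le_prod_one_sub_pow_div_pow hq s.lt_succ_self) ?_
    rw [sub_nonneg, div_le_one hq₀]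
    exact hq.le

theorem mul_one_sub_one_div_nonneg (hq : 2 ≤ q) : 0 ≤ (1 - 1 / (q * (q - 1))) * (1 - 1 / q) := by
  have hq₁ : 1 ≤ q - 1 := by linarith
  have hq₂ : 1 ≤ q * (q - 1) := one_le_mul_of_one_le_of_one_le (by linarith) hq₁
  refine mul_nonneg (sub_nonneg.2 ?_) (sub_nonneg.2 ?_)
  · exact div_le_one_of_le₀ hq₂ (by positivity)
  · exact div_le_one_of_le₀ (by linarith) (by positivity)

theorem fraction_le_sq_mul_one_sub (hq : 2 ≤ q) :
    (q ^ 4 - 2) * (q ^ 2 - q - 1) / (q ^ 3 * (q ^ 3 + q ^ 2 + q + 1)) ≤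
      (1 - 1 / (q * (q - 1))) ^ 2 * (1 - 1 / q) := by
  obtain ⟨t, ht, rfl⟩ : ∃ t, 0 ≤ t ∧ q = t + 2 := ⟨q - 2, sub_nonneg.2 hq, by ring⟩
  have h₁ : t + 2 - 1 = t + 1 := by ring
  have h_eq : (1 - 1 / ((t + 2) * (t + 2 - 1))) ^ 2 * (1 - 1 / (t + 2)) =
      ((t + 2) ^ 2 - (t + 2) - 1) ^ 2 / ((t + 2) ^ 3 * (t + 1)) := by
    rw [h₁]
    field_simp
    ring
  rw [h_eq, div_le_div_iff₀ (by positivity) (by positivity), ← sub_nonneg]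
  ring_nf
  positivity

theorem one_sub_two_div_le_fraction (hq : 0 < q) :
    1 - 2 / q ≤ (q ^ 4 - 2) * (q ^ 2 - q - 1) / (q ^ 3 * (q ^ 3 + q ^ 2 + q + 1)) := by
  rw [one_sub_div hq.ne', div_le_div_iff₀ hq (by positivity), ← sub_nonneg]
  ring_nf
  positivity

end Estimates

section Proportion

/-- The proportion of the elements of a finite type satisfying `p`, that is, the probability of `p`
for a uniformly distributed element. By the conventions for `Nat.card` and for division by `0`, it
is `0` on empty and on infinite types. -/
noncomputable def proportion {α : Type*} (p : α → Prop) : ℚ :=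
  Nat.card {a // p a} / Nat.card α

variable {α β : Type*}

theorem proportion_nonneg (p : α → Prop) : 0 ≤ proportion p := by
  unfold proportion
  positivity

theorem proportion_mul_natCard [Finite α] (p : α → Prop) :
    proportion p * Nat.card α = Nat.card {a // p a} := by
  refine div_mul_cancel_of_imp fun h => ?_
  have : IsEmpty α := Finite.card_eq_zero_iff.1 (Nat.cast_eq_zero.1 h)
  simp

theorem proportion_comp_equiv (e : α ≃ β) (p : β → Prop) :
    proportion (fun a => p (e a)) = proportion p := by
  rw [proportion, proportion, Nat.card_congr e, Nat.card_congr (e.subtypeEquiv fun _ => Iff.rfl)]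

theorem natCard_subtype_comp {G H : Type*} [AddGroup G] [AddGroup H] {φ : G →+ H}
    (hφ : Surjective φ) (p : H → Prop) :
    Nat.card {g // p (φ g)} = Nat.card {h // p h} * Nat.card φ.ker := by
  rw [← Nat.card_prod]
  exact Nat.card_congr <| (Equiv.sigmaSubtypeFiberEquivSubtype φ fun _ => Iff.rfl).symm.trans <|
    (Equiv.sigmaCongrRight fun h : Subtype p => φ.fiberEquivKerOfSurjective hφ h.1).trans
      (Equiv.sigmaEquivProd _ _)

theorem proportion_comp_of_surjective {G H : Type*} [AddGroup G] [Finite G] [AddGroup H]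
    {φ : G →+ H} (hφ : Surjective φ) (p : H → Prop) :
    proportion (fun g => p (φ g)) = proportion p := by
  have h_ker : (Nat.card φ.ker : ℚ) ≠ 0 := Nat.cast_ne_zero.2 Finite.card_pos.ne'
  have h_card : Nat.card G = Nat.card H * Nat.card φ.ker := by
    simpa using natCard_subtype_comp hφ fun _ => True
  rw [proportion, proportion, natCard_subtype_comp hφ, h_card, Nat.cast_mul, Nat.cast_mul,
    mul_div_mul_right _ _ h_ker]

theorem proportion_comp_linearMap_of_surjective {R M N : Type*} [Ring R] [AddCommGroup M]
    [Module R M] [Finite M] [AddCommGroup N] [Module R N] {φ : M →ₗ[R] N} (hφ : Surjective φ)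
    (p : N → Prop) : proportion (fun x => p (φ x)) = proportion p :=
  proportion_comp_of_surjective (φ := φ.toAddMonoidHom) hφ p

theorem proportion_prod [Fintype α] [Finite β] (p : α → β → Prop) :
    proportion (fun x : α × β => p x.1 x.2) = (∑ a, proportion (p a)) / Nat.card α := by
  simp only [proportion]
  rw [← Finset.sum_div, Nat.card_congr (Equiv.subtypeProdEquivSigmaSubtype p), Nat.card_sigma,
    Nat.cast_sum, Nat.card_prod, Nat.cast_mul, div_div, mul_comm (Nat.card β : ℚ)]

theorem proportion_mul_le_proportion_prod [Finite α] [Finite β] {r : α → Prop}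
    {p : α → β → Prop} {c : ℚ} (h : ∀ a, r a → c ≤ proportion (p a)) :
    proportion r * c ≤ proportion fun x : α × β => p x.1 x.2 := by
  classical
  have : Fintype α := Fintype.ofFinite α
  rw [proportion_prod, proportion, div_mul_eq_mul_div]
  gcongr
  calc (Nat.card {a // r a} : ℚ) * c = ∑ a with r a, c := by
        rw [Finset.sum_const, nsmul_eq_mul, Nat.card_eq_fintype_card, Fintype.card_subtype]
    _ ≤ ∑ a with r a, proportion (p a) :=
        Finset.sum_le_sum fun a ha => h a (Finset.mem_filter.1 ha).2
    _ ≤ ∑ a, proportion (p a) :=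
        Finset.sum_le_sum_of_subset_of_nonneg (Finset.subset_univ _) fun _ _ _ =>
          proportion_nonneg _

end Proportion

section LinearAlgebra

theorem injective_iff_linearIndependent_comp_basis {ι R M N : Type*} [Semiring R]
    [AddCommMonoid M] [Module R M] [AddCommMonoid N] [Module R N] (b : Basis ι R M)
    (f : M →ₗ[R] N) : Injective f ↔ LinearIndependent R (f ∘ b) := by
  have h_comb : ⇑(Finsupp.linearCombination R (f ∘ b)) = f ∘ b.repr.symm := by
    ext c
    rw [comp_apply, Basis.repr_symm_apply, Finsupp.apply_linearCombination]
  rw [LinearIndependent, h_comb, EquivLike.injective_comp]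

theorem injective_add_comp_iff {R E E' G : Type*} [Ring R] [AddCommGroup E] [Module R E]
    [AddCommGroup E'] [Module R E'] [AddCommGroup G] [Module R G] (f : E →ₗ[R] E')
    (v : G →ₗ[R] E') (u : E →ₗ[R] G) :
    Injective (f + v ∘ₗ u) ↔ Injective (f.submoduleComap v.range +
      v.rangeRestrict ∘ₗ u ∘ₗ (v.range.comap f).subtype) := by
  set K := v.range.comap f
  set T := f.submoduleComap v.range + v.rangeRestrict ∘ₗ u ∘ₗ K.subtype
  have h_ker : (f + v ∘ₗ u).ker ≤ K := fun x hx => by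
    have hx' : f x = v (-u x) := by
      rw [map_neg]
      exact eq_neg_of_add_eq_zero_left hx
    exact ⟨-u x, hx'.symm⟩
  have h_restrict : ⇑((f + v ∘ₗ u).domRestrict K) = Subtype.val ∘ T := rfl
  rw [← Subtype.val_injective.of_comp_iff T, ← h_restrict, LinearMap.injective_domRestrict_iff,
    disjoint_comm, disjoint_iff, inf_eq_left.2 h_ker, LinearMap.ker_eq_bot]

theorem finrank_comap_eq_of_range_sup_eq_top {F E E' : Type*} [DivisionRing F] [AddCommGroup E]
    [Module F E] [FiniteDimensional F E] [AddCommGroup E'] [Module F E'] [FiniteDimensional F E']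
    (h_dim : finrank F E = finrank F E') {f : E →ₗ[F] E'} {C : Submodule F E'}
    (h : f.range ⊔ C = ⊤) : finrank F (C.comap f) = finrank F C := by
  have h_ker : (C.mkQ ∘ₗ f).ker = C.comap f := by rw [LinearMap.ker_comp, Submodule.ker_mkQ]
  have h_range : (C.mkQ ∘ₗ f).range = ⊤ := by
    rw [LinearMap.range_comp, Submodule.map_mkQ_eq_top, sup_comm, h]
  have h_rank_nullity := (C.mkQ ∘ₗ f).finrank_range_add_finrank_ker
  rw [h_ker, h_range, finrank_top] at h_rank_nullity
  have h_quotient := C.finrank_quotient_add_finrank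
  lia

theorem transpose_surjective {R M N : Type*} [CommRing R] [AddCommGroup M] [Module R M]
    [AddCommGroup N] [Module R N] [IsReflexive R N] :
    Surjective (Dual.transpose : (M →ₗ[R] N) →ₗ[R] Dual R N →ₗ[R] Dual R M) := fun g =>
  ⟨(evalEquiv R N).symm ∘ₗ Dual.transpose g ∘ₗ Dual.eval R M, LinearMap.ext fun l =>
    LinearMap.ext fun _ => apply_evalEquiv_symm_apply R N l _⟩

end LinearAlgebra

section RandomLinearMaps

variable {F V V' W W' E E' G : Type*} [Field F] [Finite F]
  [AddCommGroup V] [Module F V] [FiniteDimensional F V]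
  [AddCommGroup V'] [Module F V']
  [AddCommGroup W] [Module F W] [FiniteDimensional F W]
  [AddCommGroup W'] [Module F W']
  [AddCommGroup E] [Module F E] [FiniteDimensional F E]
  [AddCommGroup E'] [Module F E'] [FiniteDimensional F E']
  [AddCommGroup G] [Module F G] [FiniteDimensional F G]

local notation "q" => (Nat.card F : ℚ)

theorem proportion_comp_left {p : W →ₗ[F] W'} (hp : Surjective p) (P : (V →ₗ[F] W') → Prop) :
    proportion (fun f : V →ₗ[F] W => P (p ∘ₗ f)) = proportion P := by
  have : Finite (V →ₗ[F] W) := Module.finite_of_finite F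
  exact proportion_comp_linearMap_of_surjective
    (φ := (p.compRight F : (V →ₗ[F] W) →ₗ[F] V →ₗ[F] W'))
    (fun g => projective_lifting_property p g hp) P

theorem proportion_comp_right {i : V' →ₗ[F] V} (hi : Injective i) (P : (V' →ₗ[F] W) → Prop) :
    proportion (fun f : V →ₗ[F] W => P (f ∘ₗ i)) = proportion P := by
  have : Finite (V →ₗ[F] W) := Module.finite_of_finite F
  obtain ⟨r, hr⟩ := i.exists_leftInverse_of_injective (LinearMap.ker_eq_bot.2 hi)
  have h_surj : Surjective (i.lcomp F W) := fun g =>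
    ⟨g ∘ₗ r, show (g ∘ₗ r) ∘ₗ i = g by rw [LinearMap.comp_assoc, hr, LinearMap.comp_id]⟩
  exact proportion_comp_linearMap_of_surjective h_surj P

theorem natCard_injective (h : finrank F V ≤ finrank F W) :
    Nat.card {f : V →ₗ[F] W // Injective f} =
      ∏ i ∈ Finset.range (finrank F V), (Nat.card F ^ finrank F W - Nat.card F ^ i) := by
  have : Fintype F := Fintype.ofFinite F
  have : Finite W := Module.finite_of_finite F
  let b := finBasis F V
  have e : {f : V →ₗ[F] W // Injective f} ≃
      {w : Fin (finrank F V) → W // LinearIndependent F w} :=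
    (b.constr F).symm.toEquiv.subtypeEquiv fun f =>
      injective_iff_linearIndependent_comp_basis b f
  rw [Nat.card_congr e, card_linearIndependent h, Nat.card_eq_fintype_card (α := F),
    Fin.prod_univ_eq_prod_range fun i => Fintype.card F ^ finrank F W - Fintype.card F ^ i]

theorem proportion_injective (h : finrank F V ≤ finrank F W) :
    proportion (fun f : V →ₗ[F] W => Injective f) =
      ∏ i ∈ Finset.range (finrank F V), (1 - q ^ i / q ^ finrank F W) := by
  have hq : 0 < Nat.card F := Nat.card_pos
  have h_card : (Nat.card (V →ₗ[F] W) : ℚ) =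
      ∏ _i ∈ Finset.range (finrank F V), q ^ finrank F W := by
    rw [natCard_eq_pow_finrank (K := F), finrank_linearMap, Finset.prod_const, Finset.card_range,
      Nat.cast_pow, mul_comm, pow_mul]
  rw [proportion, natCard_injective h, h_card, Nat.cast_prod, ← Finset.prod_div_distrib]
  refine Finset.prod_congr rfl fun i hi => ?_
  have h_pow : Nat.card F ^ i ≤ Nat.card F ^ finrank F W :=
    Nat.pow_le_pow_right hq ((Finset.mem_range.1 hi).le.trans h)
  rw [Nat.cast_sub h_pow, Nat.cast_pow, Nat.cast_pow, one_sub_div (by positivity)]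

theorem proportion_surjective (h : finrank F W ≤ finrank F V) :
    proportion (fun f : V →ₗ[F] W => Surjective f) =
      ∏ i ∈ Finset.range (finrank F W), (1 - q ^ i / q ^ finrank F V) := by
  have : Finite (V →ₗ[F] W) := Module.finite_of_finite F
  have h_dual : finrank F (Dual F W) ≤ finrank F (Dual F V) := by
    rwa [Subspace.dual_finrank_eq, Subspace.dual_finrank_eq]
  calc proportion (fun f : V →ₗ[F] W => Surjective f)
      = proportion fun f : V →ₗ[F] W => Injective (Dual.transpose f) := by
        simp only [← LinearMap.dualMap_injective_iff]
        rfl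
    _ = proportion fun g : Dual F W →ₗ[F] Dual F V => Injective g :=
        proportion_comp_linearMap_of_surjective transpose_surjective
          fun g : Dual F W →ₗ[F] Dual F V => Injective g
    _ = ∏ i ∈ Finset.range (finrank F W), (1 - q ^ i / q ^ finrank F V) := by
        rw [proportion_injective h_dual, Subspace.dual_finrank_eq, Subspace.dual_finrank_eq]

theorem proportion_sup_range_eq_top (C : Submodule F E') (h : finrank F (E' ⧸ C) ≤ finrank F G) :
    proportion (fun v : G →ₗ[F] E' => C ⊔ v.range = ⊤) =
      ∏ i ∈ Finset.range (finrank F (E' ⧸ C)), (1 - q ^ i / q ^ finrank F G) := by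
  simp only [← Submodule.map_mkQ_eq_top, ← LinearMap.range_comp, LinearMap.range_eq_top]
  rw [proportion_comp_left C.mkQ_surjective fun g : G →ₗ[F] E' ⧸ C => Surjective g,
    proportion_surjective h]

theorem proportion_injective_add_comp (h_dim : finrank F E = finrank F E') {f : E →ₗ[F] E'}
    {v : G →ₗ[F] E'} (h : f.range ⊔ v.range = ⊤) :
    proportion (fun u : E →ₗ[F] G => Injective (f + v ∘ₗ u)) =
      ∏ i ∈ Finset.range (finrank F v.range), (1 - q ^ i / q ^ finrank F v.range) := by
  let K := v.range.comap f
  let f_K : K →ₗ[F] v.range := f.submoduleComap v.range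
  have hK : finrank F K = finrank F v.range := finrank_comap_eq_of_range_sup_eq_top h_dim h
  calc proportion (fun u : E →ₗ[F] G => Injective (f + v ∘ₗ u))
      = proportion fun u : E →ₗ[F] G => Injective (f_K + v.rangeRestrict ∘ₗ u ∘ₗ K.subtype) := by
        simp only [injective_add_comp_iff f v, f_K, K]
    _ = proportion fun w : K →ₗ[F] G => Injective (f_K + v.rangeRestrict ∘ₗ w) :=
        proportion_comp_right K.injective_subtype
          fun w => Injective (f_K + v.rangeRestrict ∘ₗ w)
    _ = proportion fun T : K →ₗ[F] v.range => Injective (f_K + T) :=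
        proportion_comp_left v.surjective_rangeRestrict
          fun T : K →ₗ[F] v.range => Injective (f_K + T)
    _ = proportion fun T : K →ₗ[F] v.range => Injective T :=
        proportion_comp_equiv (Equiv.addLeft f_K) fun T => Injective T
    _ = _ := by rw [proportion_injective hK.le, hK]

theorem le_proportion_injective_add_comp (h_dim : finrank F E = finrank F E') (f : E →ₗ[F] E')
    (h : finrank F E' < finrank F f.range + finrank F G) :
    (1 - 1 / (q * (q - 1))) ^ 2 * (1 - 1 / q) ≤
      proportion fun x : (G →ₗ[F] E') × (E →ₗ[F] G) => Injective (f + x.1 ∘ₗ x.2) := by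
  have : Finite (G →ₗ[F] E') := Module.finite_of_finite F
  have : Finite (E →ₗ[F] G) := Module.finite_of_finite F
  have hq : 1 < q := Nat.one_lt_cast.2 Finite.one_lt_card
  have h_corank : finrank F (E' ⧸ f.range) < finrank F G := by
    have := f.range.finrank_quotient_add_finrank
    lia
  have h_nonneg : 0 ≤ (1 - 1 / (q * (q - 1))) * (1 - 1 / q) :=
    mul_one_sub_one_div_nonneg (by exact_mod_cast hq)
  have h_range : 1 - 1 / (q * (q - 1)) ≤
      proportion fun v : G →ₗ[F] E' => f.range ⊔ v.range = ⊤ := by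
    rw [proportion_sup_range_eq_top f.range h_corank.le]
    exact one_sub_le_prod_one_sub_pow_div_pow hq h_corank
  have h_injective (v : G →ₗ[F] E') (hv : f.range ⊔ v.range = ⊤) :
      (1 - 1 / (q * (q - 1))) * (1 - 1 / q) ≤
        proportion fun u : E →ₗ[F] G => Injective (f + v ∘ₗ u) := by
    rw [proportion_injective_add_comp h_dim hv]
    exact mul_one_sub_le_prod_one_sub_pow_div_pow_self hq _
  rw [sq, mul_assoc]
  exact (mul_le_mul_of_nonneg_right h_range h_nonneg).trans
    (proportion_mul_le_proportion_prod (r := fun v : G →ₗ[F] E' => f.range ⊔ v.range = ⊤)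
      (p := fun v (u : E →ₗ[F] G) => Injective (f + v ∘ₗ u)) h_injective)

end RandomLinearMaps

section Matrices

open Matrix

variable {F ι κ : Type*} [Field F] [Fintype ι] [Fintype κ]

theorem isUnit_add_mul_iff [DecidableEq ι] [DecidableEq κ] (A : Matrix ι ι F) (V : Matrix ι κ F)
    (U : Matrix κ ι F) :
    IsUnit (A + V * U) ↔ Injective (toLin' A + toLin' V ∘ₗ toLin' U) := by
  rw [← toLin'_mul, ← map_add, ← mulVec_injective_iff_isUnit]
  rfl

theorem proportion_isUnit_add_mul [DecidableEq ι] (A : Matrix ι ι F) :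
    proportion (fun p : Matrix κ ι F × Matrix ι κ F => IsUnit (A + p.2 * p.1)) =
      proportion fun x : ((κ → F) →ₗ[F] ι → F) × ((ι → F) →ₗ[F] κ → F) =>
        Injective (toLin' A + x.1 ∘ₗ x.2) := by
  classical
  simp only [isUnit_add_mul_iff]
  exact proportion_comp_equiv
    ((Equiv.prodComm _ _).trans (toLin'.toEquiv.prodCongr toLin'.toEquiv))
    fun x : ((κ → F) →ₗ[F] ι → F) × ((ι → F) →ₗ[F] κ → F) =>
      Injective (toLin' A + x.1 ∘ₗ x.2)

theorem natCard_matrix_prod_matrix [Finite F] :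
    Nat.card (Matrix κ ι F × Matrix ι κ F) =
      Nat.card F ^ (2 * Fintype.card ι * Fintype.card κ) := by
  rw [natCard_eq_pow_finrank (K := F), finrank_prod, finrank_matrix, finrank_matrix,
    finrank_self]
  congr 1
  ring

end Matrices

theorem additive_preconditioner_nonsingular_count_excess_general
    {F ι κ : Type*} [Field F] [Fintype F] [Fintype ι] [DecidableEq ι] [Fintype κ]
    {q : ℚ} (hq : q = Fintype.card F) (A : Matrix ι ι F)
    (h : Fintype.card ι < A.rank + Fintype.card κ) :
    ((q ^ 4 - 2) * (q ^ 2 - q - 1) / (q ^ 3 * (q ^ 3 + q ^ 2 + q + 1))) *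
        q ^ (2 * Fintype.card ι * Fintype.card κ) ≤
      (Nat.card {p : Matrix κ ι F × Matrix ι κ F // IsUnit (A + p.2 * p.1)} : ℚ) ∧
    1 - 2 / q ≤ (q ^ 4 - 2) * (q ^ 2 - q - 1) / (q ^ 3 * (q ^ 3 + q ^ 2 + q + 1)) := by
  have hq₂ : 2 ≤ q := hq ▸ Nat.ofNat_le_cast.2 Fintype.one_lt_card
  rw [← Nat.card_eq_fintype_card] at hq
  have h_corank : finrank F (ι → F) <
      finrank F (Matrix.toLin' A).range + finrank F (κ → F) := by
    rwa [finrank_fintype_fun_eq_card, finrank_fintype_fun_eq_card, Matrix.toLin'_apply']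
  have h_prop := le_proportion_injective_add_comp rfl (Matrix.toLin' A) h_corank
  rw [← proportion_isUnit_add_mul, ← hq] at h_prop
  refine ⟨?_, one_sub_two_div_le_fraction (two_pos.trans_le hq₂)⟩
  rw [← proportion_mul_natCard, natCard_matrix_prod_matrix, Nat.cast_pow, ← hq]
  gcongr
  exact (fraction_le_sq_mul_one_sub hq₂).trans h_prop

/-- if `A` has rank `r < n` and `k > n - r`, then the number of pairs
`(U, V)` with `A + V·U` invertible is at least
`((q⁴ - 2)(q² - q - 1) / (q³(q³ + q² + q + 1))) · q^(2nk)`,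
and this fraction is at least `1 - 2/q`. -/
theorem additive_preconditioner_nonsingular_count_excess
    {F : Type*} [Field F] [Fintype F] (n r k : ℕ) (hrn : r < n) (hk : n - r < k)
    (hkpos : 0 < k)
    (q : ℚ) (hq : q = (Fintype.card F : ℚ))
    (A : Matrix (Fin n) (Fin n) F) (hrank : A.rank = r) :
    ((q ^ 4 - 2) * (q ^ 2 - q - 1) / (q ^ 3 * (q ^ 3 + q ^ 2 + q + 1))) *
        q ^ (2 * n * k) ≤
      (Nat.card {p : Matrix (Fin k) (Fin n) F × Matrix (Fin n) (Fin k) F //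
        IsUnit (A + p.2 * p.1)} : ℚ) ∧
    1 - 2 / q ≤ (q ^ 4 - 2) * (q ^ 2 - q - 1) / (q ^ 3 * (q ^ 3 + q ^ 2 + q + 1)) := by
  simpa only [Fintype.card_fin] using
    additive_preconditioner_nonsingular_count_excess_general (κ := Fin k) hq A
      (by simp only [Fintype.card_fin]; lia)
end

section
/- Let F be a finite field with q elements, let n be a positive integer, let A ∈ M_n(F), let f ∈ F[z] be a monic irreducible polynomial of degree d, and let ℓ be a positive integer such that exactly ℓ of the invariant factors of A are divisible by f, i.e., n − rank(f(A)) = ℓ·d. Consider rank-one updates A + v·uᵀ for column vectors v ∈ F^n and u ∈ F^n. Then: (1) the number of pairs (v, u) ∈ F^n × F^n such that exactly ℓ−1 of the invariant factors of A + v·uᵀ are divisible by f (i.e., n − rank(f(A + v·uᵀ)) = (ℓ−1)·d) is at least (1 − q^(−ℓd))² · q^(2n); (2) the number of pairs such that exactly ℓ+1 of the invariant factors of A + v·uᵀ are divisible by f (i.e., n − rank(f(A + v·uᵀ)) = (ℓ+1)·d) is at most q^(−2ℓd) · q^(2n); (3) for every pair (v, u), the number of invariant factors of A + v·uᵀ divisible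 by f lies in {ℓ−1, ℓ, ℓ+1}, i.e., n − rank(f(A + v·uᵀ)) ∈ {(ℓ−1)·d, ℓ·d, (ℓ+1)·d}. -/
/-!
The invariant factors of `A` are those of the characteristic matrix `X - A` over `F[X]`, so the
number of them divisible by `f` is the nullity of `X - A` reduced modulo `f`, a matrix over the
field `K = F[X]/(f)`. A rank-one update of `A` is a rank-one update of this reduction `B`, hence
moves the nullity by at most one: it cannot go up unless `v` is in the column space and `u` in the
row space of `B`, and it goes down when neither is.

These conditions on `v` and `u` are counted over `F`. Reducing the exact sequence
`F[X]^n → F[X]^n → F^n → 0`, whose first map is `X - A` and whose second evaluates at `A`, modulo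
`f` gives `F^n / f(A) F^n ≃ K^n / B K^n`. So `v` is in the column space of `B` exactly when it is
in `f(A) F^n`, a subspace of codimension `ℓ d`; transposing gives the same for `u`.
-/

open Polynomial Matrix

section RankOneUpdate

variable {K m n : Type*} [Field K] [Fintype n]

theorem rank_add_le_rank_add_rank [Finite m] (B C : Matrix m n K) :
    (B + C).rank ≤ B.rank + C.rank := by
  have hrange : LinearMap.range (B + C).mulVecLin ≤
      LinearMap.range B.mulVecLin ⊔ LinearMap.range C.mulVecLin := by
    rw [mulVecLin_add]
    exact LinearMap.range_add_le _ _
  exact (Submodule.finrank_mono hrange).trans (Submodule.finrank_add_le_finrank_add_finrank _ _)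

theorem rank_add_vecMulVec_le [Finite m] (B : Matrix m n K) (v : m → K) (u : n → K) :
    (B + vecMulVec v u).rank ≤ B.rank + 1 :=
  (rank_add_le_rank_add_rank B _).trans (Nat.add_le_add_left (rank_vecMulVec_le v u) _)

theorem rank_le_rank_add_vecMulVec_add_one [Finite m] (B : Matrix m n K) (v : m → K) (u : n → K) :
    B.rank ≤ (B + vecMulVec v u).rank + 1 := by
  simpa [neg_vecMulVec] using rank_add_vecMulVec_le (B + vecMulVec v u) (-v) u

theorem mem_ker_add_vecMulVec_iff {B : Matrix m n K} {v : m → K} (u : n → K)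
    (hv : v ∉ LinearMap.range B.mulVecLin) {x : n → K} :
    x ∈ LinearMap.ker (B + vecMulVec v u).mulVecLin ↔ B *ᵥ x = 0 ∧ u ⬝ᵥ x = 0 := by
  have hexpand : (B + vecMulVec v u) *ᵥ x = B *ᵥ x + (u ⬝ᵥ x) • v := by
    rw [add_mulVec, vecMulVec_mulVec, op_smul_eq_smul]
  rw [LinearMap.mem_ker, mulVecLin_apply, hexpand]
  refine ⟨fun hx => ?_, fun ⟨hBx, hux⟩ => by rw [hBx, hux, zero_smul, add_zero]⟩
  have hux : u ⬝ᵥ x = 0 := by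
    by_contra hne
    refine hv ((Submodule.smul_mem_iff _ hne).mp ?_)
    rw [← neg_eq_of_add_eq_zero_right hx]
    exact neg_mem ⟨x, rfl⟩
  exact ⟨by simpa [hux] using hx, hux⟩

theorem rank_le_rank_of_ker_le {l : Type*} {B : Matrix m n K} {C : Matrix l n K}
    (h : LinearMap.ker C.mulVecLin ≤ LinearMap.ker B.mulVecLin) : B.rank ≤ C.rank := by
  have hB := LinearMap.finrank_range_add_finrank_ker B.mulVecLin
  have hC := LinearMap.finrank_range_add_finrank_ker C.mulVecLin
  have hker := Submodule.finrank_mono h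
  simp only [Matrix.rank]
  omega

theorem rank_lt_rank_of_ker_lt {l : Type*} {B : Matrix m n K} {C : Matrix l n K}
    (h : LinearMap.ker C.mulVecLin < LinearMap.ker B.mulVecLin) : B.rank < C.rank := by
  have hB := LinearMap.finrank_range_add_finrank_ker B.mulVecLin
  have hC := LinearMap.finrank_range_add_finrank_ker C.mulVecLin
  have hker := Submodule.finrank_lt_finrank_of_lt h
  simp only [Matrix.rank]
  omega

theorem ker_add_vecMulVec_le {B : Matrix m n K} {v : m → K} (u : n → K)
    (hv : v ∉ LinearMap.range B.mulVecLin) :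
    LinearMap.ker (B + vecMulVec v u).mulVecLin ≤ LinearMap.ker B.mulVecLin :=
  fun _ hx => ((mem_ker_add_vecMulVec_iff u hv).mp hx).1

theorem exists_mulVec_eq_zero_dotProduct_ne_zero [Fintype m] {B : Matrix m n K} {u : n → K}
    (hu : u ∉ LinearMap.range Bᵀ.mulVecLin) : ∃ x, B *ᵥ x = 0 ∧ u ⬝ᵥ x ≠ 0 := by
  classical
  contrapose! hu
  have hmem : dotProductEquiv K n u ∈ LinearMap.range B.mulVecLin.dualMap := by
    rw [LinearMap.range_dualMap_eq_dualAnnihilator_ker, Submodule.mem_dualAnnihilator]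
    exact hu
  obtain ⟨φ, hφ⟩ := hmem
  obtain ⟨y, rfl⟩ := (dotProductEquiv K m).surjective φ
  refine ⟨y, dotProduct_eq _ _ fun x => ?_⟩
  rw [mulVecLin_apply, mulVec_transpose, ← dotProduct_mulVec]
  exact LinearMap.congr_fun hφ x

theorem rank_add_vecMulVec_of_notMem_range [Fintype m] {B : Matrix m n K} {v : m → K} {u : n → K}
    (hv : v ∉ LinearMap.range B.mulVecLin) (hu : u ∉ LinearMap.range Bᵀ.mulVecLin) :
    (B + vecMulVec v u).rank = B.rank + 1 := by
  obtain ⟨x, hBx, hux⟩ := exists_mulVec_eq_zero_dotProduct_ne_zero hu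
  have hx : x ∉ LinearMap.ker (B + vecMulVec v u).mulVecLin :=
    fun hx => hux ((mem_ker_add_vecMulVec_iff u hv).mp hx).2
  exact (rank_add_vecMulVec_le B v u).antisymm <| rank_lt_rank_of_ker_lt <|
    (ker_add_vecMulVec_le u hv).lt_of_not_ge fun hle => hx (hle hBx)

theorem finrank_quotient_range_mulVecLin [Fintype m] (B : Matrix m n K) :
    Module.finrank K ((m → K) ⧸ LinearMap.range B.mulVecLin) = Fintype.card m - B.rank := by
  rw [Submodule.finrank_quotient, Module.finrank_pi, Matrix.rank]

end RankOneUpdate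

section CharmatrixCokernel

theorem C_comp_single_one {R ι : Type*} [Semiring R] [DecidableEq ι] (i : ι) :
    C ∘ (Pi.single i 1 : ι → R) = (Pi.single i 1 : ι → R[X]) :=
  funext fun j => (Pi.apply_single (fun _ => C) (fun _ => C_0) i 1 j).trans (by rw [C_1])

variable {R ι : Type*} [CommRing R] [Fintype ι] [DecidableEq ι]

/-- Evaluation at `A` of a vector of polynomials, seen as a polynomial with coefficients in
`ι → R`: the coefficient `v` of `X ^ k` contributes `A ^ k *ᵥ v`. The codomain is `ι → R` with `X`
acting as `A`, which makes the map `R[X]`-linear. -/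
noncomputable def polyVecEval (A : Matrix ι ι R) :
    (ι → R[X]) →ₗ[R[X]] Module.AEval' (toLinAlgEquiv' A) :=
  Fintype.linearCombination R[X] fun i => Module.AEval'.of _ (Pi.single i 1)

theorem polyVecEval_C_comp (A : Matrix ι ι R) (v : ι → R) :
    polyVecEval A (C ∘ v) = Module.AEval'.of _ v := by
  conv_rhs => rw [pi_eq_sum_univ' v]
  simp [polyVecEval, Fintype.linearCombination_apply, Module.AEval.C_smul]

theorem smul_of_eq_of_aeval_mulVec (A : Matrix ι ι R) (f : R[X]) (v : ι → R) :
    f • Module.AEval'.of (toLinAlgEquiv' A) v = Module.AEval'.of _ (aeval A f *ᵥ v) := by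
  have haeval : aeval (toLinAlgEquiv' A) f = toLinAlgEquiv' (aeval A f) :=
    aeval_algHom_apply (toLinAlgEquiv' (R := R)) A f
  rw [← toLinAlgEquiv'_apply, ← haeval]
  rfl

theorem charmatrix_mulVec_C_comp (A : Matrix ι ι R) (v : ι → R) :
    A.charmatrix *ᵥ (C ∘ v) = (X : R[X]) • (C ∘ v) - C ∘ (A *ᵥ v) := by
  ext1 i
  simp [charmatrix, sub_mulVec, RingHom.map_mulVec]

theorem polyVecEval_charmatrix_mulVec (A : Matrix ι ι R) (P : ι → R[X]) :
    polyVecEval A (A.charmatrix *ᵥ P) = 0 := by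
  suffices h : polyVecEval A ∘ₗ A.charmatrix.mulVecLin = 0 from LinearMap.congr_fun h P
  refine LinearMap.pi_ext' fun i => LinearMap.ext_ring ?_
  simp [← C_comp_single_one, charmatrix_mulVec_C_comp, polyVecEval_C_comp,
    Module.AEval'.X_smul_of, -mulVec_single]

theorem range_charmatrix_eq_ker_polyVecEval (A : Matrix ι ι R) :
    LinearMap.range A.charmatrix.mulVecLin = LinearMap.ker (polyVecEval A) := by
  refine le_antisymm ?_ fun P hP => ?_
  · rintro _ ⟨P, rfl⟩
    exact polyVecEval_charmatrix_mulVec A P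
  set N := LinearMap.range A.charmatrix.mulVecLin
  let constants : (ι → R) →ₗ[R] (ι → R[X]) ⧸ N :=
    N.mkQ.restrictScalars R ∘ₗ (Algebra.linearMap R R[X]).compLeft ι
  have constants_mulVec (v : ι → R) :
      constants (toLinAlgEquiv' A • v) = (X : R[X]) • constants v :=
    ((Submodule.Quotient.eq N).mpr ⟨C ∘ v, charmatrix_mulVec_C_comp A v⟩).symm
  let lift : Module.AEval' (toLinAlgEquiv' A) →ₗ[R[X]] (ι → R[X]) ⧸ N :=
    LinearMap.ofAEval _ constants constants_mulVec
  have lift_comp : lift ∘ₗ polyVecEval A = N.mkQ := by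
    refine LinearMap.pi_ext' fun i => LinearMap.ext_ring ?_
    simp only [LinearMap.comp_apply, LinearMap.single_apply]
    rw [← C_comp_single_one, polyVecEval_C_comp]
    rfl
  rw [← N.ker_mkQ, ← lift_comp]
  exact LinearMap.ker_le_ker_comp _ _ hP

/-- The characteristic matrix `X - A` with entries reduced modulo `f`. -/
noncomputable def charmatrixMod (f : R[X]) (A : Matrix ι ι R) : Matrix ι ι (AdjoinRoot f) :=
  A.charmatrix.map (AdjoinRoot.mk f)

theorem charmatrixMod_transpose (f : R[X]) (A : Matrix ι ι R) :
    charmatrixMod f Aᵀ = (charmatrixMod f A)ᵀ := by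
  rw [charmatrixMod, charmatrix_transpose, transpose_map, charmatrixMod]

theorem charmatrixMod_add_vecMulVec (f : R[X]) (A : Matrix ι ι R) (v u : ι → R) :
    charmatrixMod f (A + vecMulVec v u) = charmatrixMod f A +
      vecMulVec (-(algebraMap R (AdjoinRoot f) ∘ v)) (algebraMap R (AdjoinRoot f) ∘ u) := by
  ext i j
  simp only [charmatrixMod, map_apply, charmatrix_apply, Matrix.add_apply, vecMulVec_apply,
    map_sub, map_add, map_mul, Pi.neg_apply, Function.comp_apply, AdjoinRoot.mk_C,
    AdjoinRoot.algebraMap_eq]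
  ring

theorem charmatrixMod_mulVec_mk_comp (f : R[X]) (A : Matrix ι ι R) (P : ι → R[X]) :
    charmatrixMod f A *ᵥ (AdjoinRoot.mk f ∘ P) = AdjoinRoot.mk f ∘ (A.charmatrix *ᵥ P) :=
  funext fun i => (RingHom.map_mulVec (AdjoinRoot.mk f) A.charmatrix P i).symm

theorem mk_comp_mem_range_charmatrixMod_iff (f : R[X]) (A : Matrix ι ι R) (P : ι → R[X]) :
    AdjoinRoot.mk f ∘ P ∈ LinearMap.range (charmatrixMod f A).mulVecLin ↔
      ∃ v, polyVecEval A P = Module.AEval'.of _ (aeval A f *ᵥ v) := by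
  constructor
  · rintro ⟨y, hy⟩
    obtain ⟨S, rfl⟩ := AdjoinRoot.mk_surjective.comp_left y
    rw [mulVecLin_apply, charmatrixMod_mulVec_mk_comp] at hy
    have hdvd (i : ι) : f ∣ (P - A.charmatrix *ᵥ S) i :=
      AdjoinRoot.mk_eq_mk.mp (congrFun hy i).symm
    choose Q hQ using hdvd
    refine ⟨(Module.AEval'.of _).symm (polyVecEval A Q), ?_⟩
    have hP : P = A.charmatrix *ᵥ S + f • Q := by
      rw [← sub_eq_iff_eq_add', funext hQ]
      rfl
    rw [← smul_of_eq_of_aeval_mulVec, LinearEquiv.apply_symm_apply, hP, map_add, map_smul,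
      polyVecEval_charmatrix_mulVec, zero_add]
  · rintro ⟨v, hv⟩
    have hker : P - f • (C ∘ v) ∈ LinearMap.ker (polyVecEval A) := by
      rw [LinearMap.mem_ker, map_sub, map_smul, polyVecEval_C_comp, smul_of_eq_of_aeval_mulVec, hv,
        sub_self]
    rw [← range_charmatrix_eq_ker_polyVecEval] at hker
    obtain ⟨S, hS⟩ := hker
    refine ⟨AdjoinRoot.mk f ∘ S, ?_⟩
    rw [mulVecLin_apply] at hS ⊢
    rw [charmatrixMod_mulVec_mk_comp, hS]
    ext i
    simp

theorem algebraMap_comp_mem_range_charmatrixMod_iff {f : R[X]} {A : Matrix ι ι R} {v : ι → R} :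
    algebraMap R (AdjoinRoot f) ∘ v ∈ LinearMap.range (charmatrixMod f A).mulVecLin ↔
      v ∈ LinearMap.range (aeval A f).mulVecLin := by
  have hmk := mk_comp_mem_range_charmatrixMod_iff f A (C ∘ v)
  simp only [polyVecEval_C_comp, EmbeddingLike.apply_eq_iff_eq] at hmk
  exact hmk.trans (exists_congr fun _ => eq_comm)

theorem neg_algebraMap_comp_mem_range_charmatrixMod_iff {f : R[X]} {A : Matrix ι ι R}
    {v : ι → R} :
    -(algebraMap R (AdjoinRoot f) ∘ v) ∈ LinearMap.range (charmatrixMod f A).mulVecLin ↔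
      v ∈ LinearMap.range (aeval A f).mulVecLin := by
  rw [neg_mem_iff, algebraMap_comp_mem_range_charmatrixMod_iff]

/-- The class of a constant vector in the cokernel of the characteristic matrix modulo `f`. -/
noncomputable def constVecMod (f : R[X]) (A : Matrix ι ι R) :
    (ι → R) →ₗ[R] (ι → AdjoinRoot f) ⧸ LinearMap.range (charmatrixMod f A).mulVecLin :=
  (Submodule.mkQ _).restrictScalars R ∘ₗ (Algebra.linearMap R (AdjoinRoot f)).compLeft ι

theorem ker_constVecMod (f : R[X]) (A : Matrix ι ι R) :
    LinearMap.ker (constVecMod f A) = LinearMap.range (aeval A f).mulVecLin :=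
  Submodule.ext fun _ => (Submodule.Quotient.mk_eq_zero _).trans
    algebraMap_comp_mem_range_charmatrixMod_iff

theorem constVecMod_surjective (f : R[X]) (A : Matrix ι ι R) :
    Function.Surjective (constVecMod f A) := by
  intro w
  obtain ⟨y, rfl⟩ := Submodule.mkQ_surjective _ w
  obtain ⟨P, rfl⟩ := AdjoinRoot.mk_surjective.comp_left y
  set v : ι → R := (Module.AEval'.of _).symm (polyVecEval A P)
  refine ⟨v, (Submodule.Quotient.eq _).mpr
    ((mk_comp_mem_range_charmatrixMod_iff f A (C ∘ v - P)).mpr ⟨0, ?_⟩)⟩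
  simp [polyVecEval_C_comp, v]

/-- The cokernel of `f(A)` is the cokernel of the characteristic matrix modulo `f`; constant
vectors represent every class of the latter. -/
noncomputable def quotientRangeAevalEquiv (f : R[X]) (A : Matrix ι ι R) :
    ((ι → R) ⧸ LinearMap.range (aeval A f).mulVecLin) ≃ₗ[R]
      (ι → AdjoinRoot f) ⧸ LinearMap.range (charmatrixMod f A).mulVecLin :=
  Submodule.quotEquivOfEq _ _ (ker_constVecMod f A).symm ≪≫ₗ
    (constVecMod f A).quotKerEquivOfSurjective (constVecMod_surjective f A)

/-- For irreducible `f` over a field, the number of invariant factors of `A` divisible by `f`.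
Diagonalizing `X - A` to its Smith normal form identifies it with the nullity of `X - A` modulo
`f`, which is taken as the definition. -/
noncomputable def numInvariantFactorsDvd (f : R[X]) (A : Matrix ι ι R) : ℕ :=
  Fintype.card ι - (charmatrixMod f A).rank

end CharmatrixCokernel

section NumInvariantFactorsDvd

variable {F ι : Type*} [Field F] [Fintype ι] [DecidableEq ι] {f : F[X]} [Fact (Irreducible f)]

theorem card_sub_rank_aeval (A : Matrix ι ι F) :
    Fintype.card ι - (aeval A f).rank = numInvariantFactorsDvd f A * f.natDegree := by
  have hf : f ≠ 0 := (Fact.out : Irreducible f).ne_zero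
  have hdeg : Module.finrank F (AdjoinRoot f) = f.natDegree := by
    rw [(AdjoinRoot.powerBasis hf).finrank, AdjoinRoot.powerBasis_dim]
  rw [← finrank_quotient_range_mulVecLin, (quotientRangeAevalEquiv f A).finrank_eq,
    ← Module.finrank_mul_finrank F (AdjoinRoot f), finrank_quotient_range_mulVecLin, hdeg,
    mul_comm, numInvariantFactorsDvd]

theorem finrank_quotient_range_aeval (A : Matrix ι ι F) :
    Module.finrank F ((ι → F) ⧸ LinearMap.range (aeval A f).mulVecLin) =
      numInvariantFactorsDvd f A * f.natDegree := by
  rw [finrank_quotient_range_mulVecLin, card_sub_rank_aeval]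

theorem numInvariantFactorsDvd_transpose (A : Matrix ι ι F) :
    numInvariantFactorsDvd f Aᵀ = numInvariantFactorsDvd f A := by
  rw [numInvariantFactorsDvd, charmatrixMod_transpose, rank_transpose, numInvariantFactorsDvd]

theorem numInvariantFactorsDvd_add_vecMulVec_le (A : Matrix ι ι F) (v u : ι → F) :
    numInvariantFactorsDvd f (A + vecMulVec v u) ≤ numInvariantFactorsDvd f A + 1 := by
  rw [numInvariantFactorsDvd, numInvariantFactorsDvd, charmatrixMod_add_vecMulVec]
  have hrank := rank_le_rank_add_vecMulVec_add_one (charmatrixMod f A)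
    (-(algebraMap F (AdjoinRoot f) ∘ v)) (algebraMap F (AdjoinRoot f) ∘ u)
  omega

theorem numInvariantFactorsDvd_le_add_vecMulVec_add_one (A : Matrix ι ι F) (v u : ι → F) :
    numInvariantFactorsDvd f A ≤ numInvariantFactorsDvd f (A + vecMulVec v u) + 1 := by
  simpa [neg_vecMulVec] using
    numInvariantFactorsDvd_add_vecMulVec_le (f := f) (A + vecMulVec v u) (-v) u

theorem numInvariantFactorsDvd_add_vecMulVec_le_of_notMem_range {A : Matrix ι ι F}
    {v : ι → F} (u : ι → F) (hv : v ∉ LinearMap.range (aeval A f).mulVecLin) :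
    numInvariantFactorsDvd f (A + vecMulVec v u) ≤ numInvariantFactorsDvd f A := by
  have hv' : -(algebraMap F (AdjoinRoot f) ∘ v) ∉
      LinearMap.range (charmatrixMod f A).mulVecLin := by
    rwa [neg_algebraMap_comp_mem_range_charmatrixMod_iff]
  rw [numInvariantFactorsDvd, charmatrixMod_add_vecMulVec]
  exact Nat.sub_le_sub_left (rank_le_rank_of_ker_le (ker_add_vecMulVec_le _ hv')) _

theorem numInvariantFactorsDvd_add_vecMulVec_add_one {A : Matrix ι ι F} {v u : ι → F}
    (hv : v ∉ LinearMap.range (aeval A f).mulVecLin)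
    (hu : u ∉ LinearMap.range (aeval Aᵀ f).mulVecLin) :
    numInvariantFactorsDvd f (A + vecMulVec v u) + 1 = numInvariantFactorsDvd f A := by
  have hv' : -(algebraMap F (AdjoinRoot f) ∘ v) ∉
      LinearMap.range (charmatrixMod f A).mulVecLin := by
    rwa [neg_algebraMap_comp_mem_range_charmatrixMod_iff]
  have hu' : algebraMap F (AdjoinRoot f) ∘ u ∉
      LinearMap.range (charmatrixMod f A)ᵀ.mulVecLin := by
    rwa [← charmatrixMod_transpose, algebraMap_comp_mem_range_charmatrixMod_iff]
  have hrank := rank_add_vecMulVec_of_notMem_range hv' hu'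
  have hcard := (charmatrixMod f (A + vecMulVec v u)).rank_le_card_width
  rw [charmatrixMod_add_vecMulVec] at hcard
  rw [numInvariantFactorsDvd, numInvariantFactorsDvd, charmatrixMod_add_vecMulVec]
  omega

theorem mem_range_aeval_of_numInvariantFactorsDvd_add_vecMulVec_eq {A : Matrix ι ι F} {v u : ι → F}
    (h : numInvariantFactorsDvd f (A + vecMulVec v u) = numInvariantFactorsDvd f A + 1) :
    v ∈ LinearMap.range (aeval A f).mulVecLin ∧ u ∈ LinearMap.range (aeval Aᵀ f).mulVecLin := by
  constructor
  · by_contra hv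
    have hle := numInvariantFactorsDvd_add_vecMulVec_le_of_notMem_range u hv
    omega
  · by_contra hu
    have hle := numInvariantFactorsDvd_add_vecMulVec_le_of_notMem_range v hu
    rw [← transpose_vecMulVec, ← transpose_add, numInvariantFactorsDvd_transpose,
      numInvariantFactorsDvd_transpose] at hle
    omega

end NumInvariantFactorsDvd

section SubspaceCard

variable {F V : Type*} [Field F] [Finite F] [AddCommGroup V] [Module F V] [Module.Finite F V]

theorem ncard_submodule (N : Submodule F V) :
    ((N : Set V).ncard : ℚ) =
      (Nat.card F : ℚ) ^ Module.finrank F V / (Nat.card F : ℚ) ^ Module.finrank F (V ⧸ N) := by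
  have hq : (Nat.card F : ℚ) ≠ 0 := Nat.cast_ne_zero.mpr Nat.card_pos.ne'
  rw [eq_div_iff (pow_ne_zero _ hq), ← Nat.card_coe_set_eq, ← N.finrank_quotient_add_finrank,
    pow_add, mul_comm]
  exact_mod_cast congrArg _ (Module.natCard_eq_pow_finrank (K := F) (V := N))

theorem ncard_compl_submodule (N : Submodule F V) :
    ((N : Set V)ᶜ.ncard : ℚ) = (1 - 1 / (Nat.card F : ℚ) ^ Module.finrank F (V ⧸ N)) *
      (Nat.card F : ℚ) ^ Module.finrank F V := by
  have : Finite V := Module.finite_of_finite F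
  have hsum := Set.ncard_add_ncard_compl (N : Set V)
  rw [Module.natCard_eq_pow_finrank (K := F)] at hsum
  rw [sub_mul, one_mul, one_div_mul_eq_div, ← ncard_submodule, eq_sub_iff_add_eq']
  exact_mod_cast hsum

end SubspaceCard

section PairCount

variable {F ι : Type*} [Field F] [Finite F] [Fintype ι] [DecidableEq ι]
  {f : F[X]} [Fact (Irreducible f)]

theorem le_ncard_numInvariantFactorsDvd_add_vecMulVec_add_one_eq (A : Matrix ι ι F) :
    (1 - 1 / (Nat.card F : ℚ) ^ (numInvariantFactorsDvd f A * f.natDegree)) ^ 2 *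
        (Nat.card F : ℚ) ^ (2 * Fintype.card ι) ≤
      {p : (ι → F) × (ι → F) | numInvariantFactorsDvd f (A + vecMulVec p.1 p.2) + 1 =
        numInvariantFactorsDvd f A}.ncard := by
  set P := LinearMap.range (aeval A f).mulVecLin
  set Q := LinearMap.range (aeval Aᵀ f).mulVecLin
  have hsub : (P : Set (ι → F))ᶜ ×ˢ (Q : Set (ι → F))ᶜ ⊆
      {p | numInvariantFactorsDvd f (A + vecMulVec p.1 p.2) + 1 = numInvariantFactorsDvd f A} :=
    fun _ hp => numInvariantFactorsDvd_add_vecMulVec_add_one hp.1 hp.2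
  refine le_of_eq_of_le ?_ (Nat.cast_le.mpr (Set.ncard_le_ncard hsub))
  rw [Set.ncard_prod, Nat.cast_mul, ncard_compl_submodule, ncard_compl_submodule,
    finrank_quotient_range_aeval, finrank_quotient_range_aeval, numInvariantFactorsDvd_transpose,
    Module.finrank_pi]
  ring

theorem ncard_numInvariantFactorsDvd_add_vecMulVec_eq_add_one_le (A : Matrix ι ι F) :
    ({p : (ι → F) × (ι → F) | numInvariantFactorsDvd f (A + vecMulVec p.1 p.2) =
        numInvariantFactorsDvd f A + 1}.ncard : ℚ) ≤
      (Nat.card F : ℚ) ^ (2 * Fintype.card ι) /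
        (Nat.card F : ℚ) ^ (2 * (numInvariantFactorsDvd f A * f.natDegree)) := by
  set P := LinearMap.range (aeval A f).mulVecLin
  set Q := LinearMap.range (aeval Aᵀ f).mulVecLin
  have hsub : {p : (ι → F) × (ι → F) | numInvariantFactorsDvd f (A + vecMulVec p.1 p.2) =
      numInvariantFactorsDvd f A + 1} ⊆ (P : Set (ι → F)) ×ˢ (Q : Set (ι → F)) :=
    fun _ hp => mem_range_aeval_of_numInvariantFactorsDvd_add_vecMulVec_eq hp
  refine (Nat.cast_le.mpr (Set.ncard_le_ncard hsub)).trans_eq ?_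
  rw [Set.ncard_prod, Nat.cast_mul, ncard_submodule, ncard_submodule,
    finrank_quotient_range_aeval, finrank_quotient_range_aeval, numInvariantFactorsDvd_transpose,
    Module.finrank_pi]
  ring

end PairCount

/-- rank-one updates and the number of invariant factors divisible by
a monic irreducible `f` of degree `d`: if exactly `ℓ ≥ 1` invariant factors of `A`
are divisible by `f` (i.e. `n - rank f(A) = ℓ·d`), then (1) at least
`(1 - q^{-ℓd})² q^{2n}` pairs `(v, u)` give exactly `ℓ-1` such invariant factors,
(2) at most `q^{-2ℓd} q^{2n}` pairs give exactly `ℓ+1`, and (3) the number of such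
invariant factors of `A + v·uᵀ` always lies in `{ℓ-1, ℓ, ℓ+1}`. -/
theorem rank_one_update_invariant_factor_counts
    {F : Type*} [Field F] [Fintype F] (n d ℓ : ℕ) (hℓ : 0 < ℓ)
    (q : ℚ) (hq : q = (Fintype.card F : ℚ))
    (A : Matrix (Fin n) (Fin n) F) (f : Polynomial F)
    (hmonic : f.Monic) (hirr : Irreducible f) (hdeg : f.natDegree = d)
    (hinv : n - (Polynomial.aeval A f).rank = ℓ * d) :
    (1 - 1 / q ^ (ℓ * d)) ^ 2 * q ^ (2 * n) ≤
      (Nat.card {p : (Fin n → F) × (Fin n → F) //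
        n - (Polynomial.aeval (A + Matrix.vecMulVec p.1 p.2) f).rank = (ℓ - 1) * d} : ℚ) ∧
    (Nat.card {p : (Fin n → F) × (Fin n → F) //
        n - (Polynomial.aeval (A + Matrix.vecMulVec p.1 p.2) f).rank = (ℓ + 1) * d} : ℚ) ≤
      q ^ (2 * n) / q ^ (2 * (ℓ * d)) ∧
    ∀ v u : Fin n → F,
      n - (Polynomial.aeval (A + Matrix.vecMulVec v u) f).rank = (ℓ - 1) * d ∨
      n - (Polynomial.aeval (A + Matrix.vecMulVec v u) f).rank = ℓ * d ∨
      n - (Polynomial.aeval (A + Matrix.vecMulVec v u) f).rank = (ℓ + 1) * d := by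
  have : Fact (Irreducible f) := ⟨hirr⟩
  subst hq hdeg
  have hcount (M : Matrix (Fin n) (Fin n) F) (k : ℕ) :
      n - (aeval M f).rank = k * f.natDegree ↔ numInvariantFactorsDvd f M = k := by
    have hnullity := card_sub_rank_aeval (f := f) M
    rw [Fintype.card_fin] at hnullity
    rw [hnullity, Nat.mul_left_inj hirr.natDegree_pos.ne']
  obtain rfl : numInvariantFactorsDvd f A = ℓ := (hcount A ℓ).mp hinv
  have hpred (k : ℕ) :
      k = numInvariantFactorsDvd f A - 1 ↔ k + 1 = numInvariantFactorsDvd f A := by omega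
  simp only [hcount, hpred, ← Nat.card_eq_fintype_card]
  refine ⟨?_, ?_, fun v u => ?_⟩
  · simpa only [Fintype.card_fin, ← Nat.card_coe_set_eq, Set.coe_ofPred] using
      le_ncard_numInvariantFactorsDvd_add_vecMulVec_add_one_eq (f := f) A
  · simpa only [Fintype.card_fin, ← Nat.card_coe_set_eq, Set.coe_ofPred] using
      ncard_numInvariantFactorsDvd_add_vecMulVec_eq_add_one_le (f := f) A
  · have hle := numInvariantFactorsDvd_add_vecMulVec_le (f := f) A v u
    have hge := numInvariantFactorsDvd_le_add_vecMulVec_add_one (f := f) A v u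
    omega
end
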